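/- Let A, B be n×n complex positive definite matrices and p ∈ ℝ. Suppose one of the following holds: (1) A ⪯ B and p ≥ 1; (2) A ≤ B (Loewner) and p ≥ 0; (3) log A ≤ log B (Loewner) and p ≥ 0. Then A^p ⪯ B^p and B^{-p} ⪯ A^{-p}. Moreover, the curve t ↦ A^p ◇_t B^p is monotonically increasing in the near order on t ∈ [0, ∞), the curve t ↦ B^{-p} ◇_t A^{-p} is monotonically increasing in the near order on t ∈ [0, ∞), and the curve t ↦ A^p ♮_t B^p is monotonically increasing in the near order on t ∈ ℝ. -/

import Mathlib

open scoped ComplexOrder Matrix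

noncomputable section

/-- Real power of a (positive definite) matrix via the continuous functional calculus. -/
def mpow {n : ℕ} (A : Matrix (Fin n) (Fin n) ℂ) (t : ℝ) : Matrix (Fin n) (Fin n) ℂ :=
  cfc (fun x : ℝ => x ^ t) A

/-- The matrix logarithm of a (positive definite) matrix via the continuous functional calculus. -/
def mlog {n : ℕ} (A : Matrix (Fin n) (Fin n) ℂ) : Matrix (Fin n) (Fin n) ℂ :=
  cfc Real.log A

/-- The metric geometric mean `A ♯ₜ B = A^{1/2} (A^{-1/2} B A^{-1/2})^t A^{1/2}`.
`A ♯ B` is `gmean A B (1/2)`. -/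
def gmean {n : ℕ} (A B : Matrix (Fin n) (Fin n) ℂ) (t : ℝ) : Matrix (Fin n) (Fin n) ℂ :=
  mpow A (1/2) * mpow (mpow A (-(1/2)) * B * mpow A (-(1/2))) t * mpow A (1/2)

/-- The Loewner order: `A ≤ B` iff `B - A` is positive semidefinite. -/
def LoewnerLE {n : ℕ} (A B : Matrix (Fin n) (Fin n) ℂ) : Prop :=
  (B - A).PosSemidef

/-- The near order: `A ⪯ B` iff `I ≤ A⁻¹ ♯ B` in the Loewner order. -/
def NearLE {n : ℕ} (A B : Matrix (Fin n) (Fin n) ℂ) : Prop :=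
  LoewnerLE 1 (gmean A⁻¹ B (1/2))

/-- The spectral geometric mean `A ♮ₜ B = (A⁻¹ ♯ B)^t A (A⁻¹ ♯ B)^t`. -/
def smean {n : ℕ} (A B : Matrix (Fin n) (Fin n) ℂ) (t : ℝ) : Matrix (Fin n) (Fin n) ℂ :=
  mpow (gmean A⁻¹ B (1/2)) t * A * mpow (gmean A⁻¹ B (1/2)) t

/-- The Wasserstein mean `A ◇ₜ B = [(1-t)I + t(A⁻¹ ♯ B)] A [(1-t)I + t(A⁻¹ ♯ B)]`. -/
def wmean {n : ℕ} (A B : Matrix (Fin n) (Fin n) ℂ) (t : ℝ) : Matrix (Fin n) (Fin n) ℂ :=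
  (((1 - t : ℝ) : ℂ) • (1 : Matrix (Fin n) (Fin n) ℂ) + ((t : ℝ) : ℂ) • gmean A⁻¹ B (1/2)) * A *
    (((1 - t : ℝ) : ℂ) • (1 : Matrix (Fin n) (Fin n) ℂ) + ((t : ℝ) : ℂ) • gmean A⁻¹ B (1/2))

/-- The arithmetic mean `A ∇ₜ B = (1-t)A + tB`. -/
def amean {n : ℕ} (A B : Matrix (Fin n) (Fin n) ℂ) (t : ℝ) : Matrix (Fin n) (Fin n) ℂ :=
  ((1 - t : ℝ) : ℂ) • A + ((t : ℝ) : ℂ) • B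

/-- The matrix absolute value `|X| = (XᴴX)^{1/2}`. -/
def matAbs {n : ℕ} (X : Matrix (Fin n) (Fin n) ℂ) : Matrix (Fin n) (Fin n) ℂ :=
  mpow (Xᴴ * X) (1/2)

/-- The eigenvalues of a Hermitian matrix listed in nonincreasing order:
`eigDesc hA i` is `λ_{i+1}(A)`, so `eigDesc hA 0 = λ₁(A) ≥ eigDesc hA 1 = λ₂(A) ≥ ⋯`. -/
def eigDesc {n : ℕ} {A : Matrix (Fin n) (Fin n) ℂ} (hA : A.IsHermitian) : Fin n → ℝ :=
  fun i => (hA.eigenvalues ∘ Tuple.sort hA.eigenvalues) i.rev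


section Helpers

open scoped MatrixOrder Matrix.Norms.L2Operator

variable {n : ℕ} {A B X Y : Matrix (Fin n) (Fin n) ℂ}

theorem h_cont (A : Matrix (Fin n) (Fin n) ℂ) (f : ℝ → ℝ) : ContinuousOn f (spectrum ℝ A) :=
  (Matrix.finite_real_spectrum (A := A)).continuousOn f

theorem h_nonneg (hA : A.PosDef) : 0 ≤ A := Matrix.nonneg_iff_posSemidef.2 hA.posSemidef

theorem h_spec (hA : A.PosDef) : ∀ x ∈ spectrum ℝ A, 0 < x :=
  (CStarAlgebra.isStrictlyPositive_iff_isSelfAdjoint_and_spectrum_pos.1 hA.isStrictlyPositive).2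

theorem mpow_eq (hA : A.PosDef) (t : ℝ) : mpow A t = A ^ t :=
  (CFC.rpow_eq_cfc_real (h_nonneg hA)).symm

theorem mpow_posDef (hA : A.PosDef) (t : ℝ) : (mpow A t).PosDef := by
  rw [mpow_eq hA]
  exact Matrix.isStrictlyPositive_iff_posDef.1 (IsStrictlyPositive.rpow A t hA.isStrictlyPositive)

theorem mpow_add (hA : A.PosDef) (s t : ℝ) : mpow A (s + t) = mpow A s * mpow A t := by
  simp only [mpow_eq hA]
  exact CFC.rpow_add hA.isUnit

theorem mpow_one (hA : A.PosDef) : mpow A 1 = A := by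
  rw [mpow_eq hA]
  exact CFC.rpow_one A (h_nonneg hA)

theorem mpow_zero (hA : A.PosDef) : mpow A 0 = 1 := by
  rw [mpow_eq hA]
  exact CFC.rpow_zero A (h_nonneg hA)

theorem one_mpow (t : ℝ) : mpow (1 : Matrix (Fin n) (Fin n) ℂ) t = 1 := by
  rw [mpow_eq Matrix.PosDef.one]
  exact CFC.one_rpow

theorem mpow_mpow (hA : A.PosDef) (s t : ℝ) : mpow (mpow A s) t = mpow A (s * t) := by
  by_cases hs : s = 0
  · subst hs
    rw [mpow_zero hA, one_mpow, zero_mul, mpow_zero hA]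
  · rw [mpow_eq (mpow_posDef hA s), mpow_eq hA, mpow_eq hA]
    exact CFC.rpow_rpow A s t hs hA.isStrictlyPositive

theorem mpow_mul_neg (hA : A.PosDef) (t : ℝ) : mpow A t * mpow A (-t) = 1 := by
  rw [← mpow_add hA, add_neg_cancel, mpow_zero hA]

theorem mpow_neg_mul (hA : A.PosDef) (t : ℝ) : mpow A (-t) * mpow A t = 1 := by
  rw [← mpow_add hA, neg_add_cancel, mpow_zero hA]

theorem mpow_neg_one (hA : A.PosDef) : mpow A (-1) = A⁻¹ := by
  have := mpow_neg_mul hA 1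
  rw [mpow_one hA] at this
  exact (Matrix.inv_eq_left_inv this).symm

theorem mpow_inv (hA : A.PosDef) (t : ℝ) : mpow A⁻¹ t = mpow A (-t) := by
  rw [← mpow_neg_one hA, mpow_mpow hA]
  congr 1
  ring

theorem mpow_half_mul (hA : A.PosDef) : mpow A (1/2) * mpow A (1/2) = A := by
  rw [← mpow_add hA]
  norm_num [mpow_one hA]

theorem conj_posDef (hX : X.PosDef) (hA : A.PosDef) : (X * A * X).PosDef := by
  have h := (Matrix.IsUnit.posDef_star_left_conjugate_iff (x := A) hX.isUnit).2 hA
  have hs : star X = X := hX.isHermitian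
  rwa [hs] at h

theorem conj_le (hX : X.PosDef) (h : A ≤ B) : X * A * X ≤ X * B * X := by
  have h := star_left_conjugate_le_conjugate h X
  have hs : star X = X := hX.isHermitian
  rwa [hs] at h

theorem mpow_mono (hA : A.PosDef) (hB : B.PosDef) (h : A ≤ B) {p : ℝ} (h0 : 0 ≤ p) (h1 : p ≤ 1) :
    mpow A p ≤ mpow B p := by
  rw [mpow_eq hA, mpow_eq hB]
  exact CFC.rpow_le_rpow ⟨h0, h1⟩ h

theorem posDef_of_le (hA : A.PosDef) (h : A ≤ B) : B.PosDef := by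
  have h2 : (B - A).PosSemidef := h
  have := hA.add_posSemidef h2
  simpa using this

/-- `gm A B = A⁻¹ ♯ B`. -/
theorem gm_eq (hA : A.PosDef) (B : Matrix (Fin n) (Fin n) ℂ) : gmean A⁻¹ B (1/2) =
    mpow A (-(1/2)) * mpow (mpow A (1/2) * B * mpow A (1/2)) (1/2) * mpow A (-(1/2)) := by
  unfold gmean
  simp only [mpow_inv hA, neg_neg]

theorem gm_posDef (hA : A.PosDef) (hB : B.PosDef) : (gmean A⁻¹ B (1/2)).PosDef := by
  rw [gm_eq hA]
  exact conj_posDef (mpow_posDef hA _) (mpow_posDef (conj_posDef (mpow_posDef hA _) hB) _)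

theorem half_conj_inv (hA : A.PosDef) (X : Matrix (Fin n) (Fin n) ℂ) :
    mpow A (-(1/2)) * (mpow A (1/2) * X * mpow A (1/2)) * mpow A (-(1/2)) = X := by
  calc _ = (mpow A (-(1/2)) * mpow A (1/2)) * X * (mpow A (1/2) * mpow A (-(1/2))) := by
        noncomm_ring
    _ = X := by rw [mpow_neg_mul hA, mpow_mul_neg hA, one_mul, mul_one]

theorem gm_riccati (hA : A.PosDef) (hB : B.PosDef) :
    gmean A⁻¹ B (1/2) * A * gmean A⁻¹ B (1/2) = B := by
  rw [gm_eq hA]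
  set D := mpow A (1/2) * B * mpow A (1/2) with hD
  have hDp : D.PosDef := conj_posDef (mpow_posDef hA _) hB
  have h3 : mpow A (-(1/2)) * A * mpow A (-(1/2)) = 1 := by
    have := half_conj_inv hA 1
    rwa [mul_one, mpow_half_mul hA] at this
  calc _ = mpow A (-(1/2)) * mpow D (1/2) * (mpow A (-(1/2)) * A * mpow A (-(1/2))) *
        mpow D (1/2) * mpow A (-(1/2)) := by noncomm_ring
    _ = mpow A (-(1/2)) * (mpow D (1/2) * mpow D (1/2)) * mpow A (-(1/2)) := by
        rw [h3]; noncomm_ring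
    _ = B := by rw [mpow_half_mul hDp, hD, half_conj_inv hA]

theorem sqrt_sq' (hX : X.PosDef) : mpow (X * X) (1/2) = X := by
  have : X * X = mpow X 2 := by
    rw [show (2:ℝ) = 1 + 1 by norm_num, mpow_add hX, mpow_one hX]
  rw [this, mpow_mpow hX]
  norm_num [mpow_one hX]

theorem le_gm (hA : A.PosDef) (hB : B.PosDef) (hY : Y.PosDef) (h : Y * A * Y ≤ B) :
    Y ≤ gmean A⁻¹ B (1/2) := by
  rw [gm_eq hA]
  have hS := mpow_posDef hA (1/2)
  have h1 := conj_le hS h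
  have hW := conj_posDef hS hY
  have h2 : mpow A (1/2) * (Y * A * Y) * mpow A (1/2) =
      (mpow A (1/2) * Y * mpow A (1/2)) * (mpow A (1/2) * Y * mpow A (1/2)) := by
    calc _ = mpow A (1/2) * (Y * (mpow A (1/2) * mpow A (1/2)) * Y) * mpow A (1/2) := by
          rw [mpow_half_mul hA]
      _ = _ := by noncomm_ring
  have h3 := mpow_mono (conj_posDef hS (conj_posDef hY hA)) (conj_posDef hS hB) h1
    (p := 1/2) (by norm_num) (by norm_num)
  rw [h2, sqrt_sq' hW] at h3
  have h4 := conj_le (mpow_posDef hA (-(1/2))) h3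
  rwa [half_conj_inv hA] at h4

theorem near_of (hA : A.PosDef) (hB : B.PosDef) (h1 : 1 ≤ Y) (h : Y * A * Y ≤ B) :
    NearLE A B :=
  show (1 : Matrix (Fin n) (Fin n) ℂ) ≤ _ from
    h1.trans (le_gm hA hB (posDef_of_le Matrix.PosDef.one h1) h)

theorem near_exists (hA : A.PosDef) (hB : B.PosDef) (h : NearLE A B) :
    ∃ Y, 1 ≤ Y ∧ Y * A * Y = B := ⟨_, h, gm_riccati hA hB⟩

theorem inv_solve (hA : A.PosDef) (hB : B.PosDef) (h : X * A * X = B) :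
    X * B⁻¹ * X = A⁻¹ := by
  have hX : IsUnit X := by
    have : IsUnit (X * A * X) := h ▸ hB.isUnit
    rw [Matrix.isUnit_iff_isUnit_det] at this ⊢
    rw [Matrix.det_mul] at this
    exact isUnit_of_mul_isUnit_right this
  have hd := (Matrix.isUnit_iff_isUnit_det _).1 hX
  rw [← h, Matrix.mul_inv_rev, Matrix.mul_inv_rev]
  rw [← mul_assoc, ← mul_assoc, Matrix.mul_nonsing_inv _ hd, one_mul, mul_assoc,
    Matrix.nonsing_inv_mul _ hd, mul_one]

theorem near_inv (hA : A.PosDef) (hB : B.PosDef) (h : NearLE A B) : NearLE B⁻¹ A⁻¹ := by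
  obtain ⟨Y, h1, hY⟩ := near_exists hA hB h
  exact near_of hB.inv hA.inv h1 (inv_solve hA hB hY).le

/-- functional calculus of the PosDef `G`. -/
theorem cfc_mul' (G : Matrix (Fin n) (Fin n) ℂ) (f g : ℝ → ℝ) :
    cfc f G * cfc g G = cfc (fun x => f x * g x) G :=
  (cfc_mul f g G (h_cont _ _) (h_cont _ _)).symm

theorem cfc_pos' (G : Matrix (Fin n) (Fin n) ℂ) (hG : G.PosDef) (f : ℝ → ℝ)
    (hf : ∀ x ∈ spectrum ℝ G, 0 < f x) : (cfc f G).PosDef := by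
  rw [← Matrix.isStrictlyPositive_iff_posDef]
  have hs : IsSelfAdjoint G := hG.isHermitian
  exact (cfc_isStrictlyPositive_iff f G (h_cont _ _) hs).2 hf

theorem one_le_cfc' (G : Matrix (Fin n) (Fin n) ℂ) (hG : G.PosDef) (f : ℝ → ℝ)
    (hf : ∀ x ∈ spectrum ℝ G, 1 ≤ f x) : 1 ≤ cfc f G := by
  have hs : IsSelfAdjoint G := hG.isHermitian
  exact one_le_cfc f G hf (h_cont _ _) hs

theorem near_curve (hA : A.PosDef) (G : Matrix (Fin n) (Fin n) ℂ) (hG : G.PosDef) (f g : ℝ → ℝ)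
    (hf : ∀ x ∈ spectrum ℝ G, 0 < f x) (hfg : ∀ x ∈ spectrum ℝ G, f x ≤ g x) :
    NearLE (cfc f G * A * cfc f G) (cfc g G * A * cfc g G) := by
  have hg : ∀ x ∈ spectrum ℝ G, 0 < g x := fun x hx => (hf x hx).trans_le (hfg x hx)
  refine near_of (conj_posDef (cfc_pos' G hG f hf) hA) (conj_posDef (cfc_pos' G hG g hg) hA)
    (Y := cfc (fun x => g x / f x) G) ?_ (le_of_eq ?_)
  · exact one_le_cfc' G hG _ fun x hx => (one_le_div (hf x hx)).2 (hfg x hx)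
  · have e1 : cfc (fun x => g x / f x) G * cfc f G = cfc g G := by
      rw [cfc_mul']
      exact cfc_congr fun x hx => div_mul_cancel₀ _ (hf x hx).ne'
    have e2 : cfc f G * cfc (fun x => g x / f x) G = cfc g G := by
      rw [cfc_mul']
      exact cfc_congr fun x hx => mul_div_cancel₀ _ (hf x hx).ne'
    calc _ = (cfc (fun x => g x / f x) G * cfc f G) * A *
          (cfc f G * cfc (fun x => g x / f x) G) := by noncomm_ring
      _ = _ := by rw [e1, e2]

theorem spec_one_le (hG : A.PosDef) (h : 1 ≤ A) : ∀ x ∈ spectrum ℝ A, 1 ≤ x := by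
  have hs : IsSelfAdjoint A := hG.isHermitian
  exact (CFC.one_le_iff A hs).1 h

theorem near_wmean (hA : A.PosDef) (hB : B.PosDef) (h : NearLE A B) {t s : ℝ} (ht : 0 ≤ t)
    (hts : t < s) : NearLE (wmean A B t) (wmean A B s) := by
  have hG := gm_posDef hA hB
  have key : ∀ r : ℝ, ((1 - r : ℝ) : ℂ) • (1 : Matrix (Fin n) (Fin n) ℂ) +
      ((r : ℝ) : ℂ) • gmean A⁻¹ B (1/2) = cfc (fun x : ℝ => (1 - r) + r * x) (gmean A⁻¹ B (1/2)) := by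
    intro r
    have hs : IsSelfAdjoint (gmean A⁻¹ B (1/2)) := hG.isHermitian
    rw [cfc_const_add _ _ _ (h_cont _ _) hs, cfc_const_mul _ _ _ (h_cont _ _), cfc_id' ℝ _ hs]
    rw [Algebra.algebraMap_eq_smul_one]
    rfl
  unfold wmean
  rw [key, key]
  have hsp := spec_one_le hG h
  refine near_curve hA _ hG _ _ (fun x hx => ?_) (fun x hx => ?_)
  · nlinarith [hsp x hx]
  · nlinarith [hsp x hx]

theorem near_smean (hA : A.PosDef) (hB : B.PosDef) (h : NearLE A B) {t s : ℝ}
    (hts : t < s) : NearLE (smean A B t) (smean A B s) := by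
  have hG := gm_posDef hA hB
  have hsp := spec_one_le hG h
  exact near_curve hA _ hG _ _ (fun x hx => Real.rpow_pos_of_pos (h_spec hG x hx) _)
    (fun x hx => Real.rpow_le_rpow_of_exponent_le (hsp x hx) hts.le)

theorem mpow_unitary_conj (hB : B.PosDef) (U : Matrix (Fin n) (Fin n) ℂ) (h1 : star U * U = 1)
    (h2 : U * star U = 1) (t : ℝ) : mpow (star U * B * U) t = star U * mpow B t * U := by
  have hU : star U ∈ unitary (Matrix (Fin n) (Fin n) ℂ) :=
    Unitary.mem_iff.2 ⟨by rwa [star_star], by rwa [star_star]⟩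
  have hs : IsSelfAdjoint B := hB.isHermitian
  let φ := Unitary.conjStarAlgAut ℂ (Matrix (Fin n) (Fin n) ℂ) ⟨star U, hU⟩
  have hφ : ∀ x, φ x = star U * x * U := fun x => by
    simp [φ, Unitary.conjStarAlgAut_apply]
  have hc : Continuous φ := by
    have : (φ : Matrix (Fin n) (Fin n) ℂ → Matrix (Fin n) (Fin n) ℂ) = fun x => star U * x * U :=
      funext hφ
    rw [this]
    fun_prop
  have hs' : IsSelfAdjoint (φ B) := hs.map φ
  have := StarAlgHomClass.map_cfc (R := ℝ) (S := ℂ) φ (fun x : ℝ => x ^ t) B (h_cont _ _) hc hs hs'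
  rw [hφ, hφ] at this
  exact this.symm

theorem near_pow_le_two (hA : A.PosDef) (hB : B.PosDef) (h : NearLE A B) {p : ℝ} (h1 : 1 ≤ p)
    (h2 : p ≤ 2) : NearLE (mpow A p) (mpow B p) := by
  obtain ⟨Y, hY1, hY⟩ := near_exists hA hB h
  have hYp := posDef_of_le Matrix.PosDef.one hY1
  refine near_of (mpow_posDef hA p) (mpow_posDef hB p) hY1 ?_
  set S := mpow A (1/2) with hS
  have hSp : S.PosDef := mpow_posDef hA _
  set R := mpow B (1/2) with hR
  set R' := mpow B (-(1/2)) with hR'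
  have hRp : R.PosDef := mpow_posDef hB _
  have hRp' : R'.PosDef := mpow_posDef hB _
  have hSS : S * S = A := mpow_half_mul hA
  have hRR : R * R = B := mpow_half_mul hB
  have sS : star S = S := hSp.isHermitian
  have sY : star Y = Y := hYp.isHermitian
  have sR' : star R' = R' := hRp'.isHermitian
  have hRR' : R * R' = 1 := mpow_mul_neg hB _
  have hR'R : R' * R = 1 := mpow_neg_mul hB _
  set U := R' * Y * S with hU
  have sU : star U = S * Y * R' := by
    rw [hU, star_mul, star_mul, sS, sY, sR', mul_assoc]
  have hUU : U * star U = 1 := by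
    rw [sU]
    calc _ = R' * (Y * (S * S) * Y) * R' := by rw [hU]; noncomm_ring
      _ = R' * (R * R) * R' := by rw [hSS, hY, hRR]
      _ = (R' * R) * (R * R') := by noncomm_ring
      _ = 1 := by rw [hRR', hR'R, one_mul]
  have hUU' : star U * U = 1 := mul_eq_one_comm.1 hUU
  have hRU : R * U = Y * S := by
    calc _ = (R * R') * (Y * S) := by rw [hU]; noncomm_ring
      _ = _ := by rw [hRR', one_mul]
  have hUR : star U * R = S * Y := by
    calc _ = (S * Y) * (R' * R) := by rw [sU]; noncomm_ring
      _ = _ := by rw [hR'R, mul_one]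
  have hD : star U * B * U = S * (Y * Y) * S := by
    calc _ = (star U * R) * (R * U) := by rw [← hRR]; noncomm_ring
      _ = _ := by rw [hUR, hRU]; noncomm_ring
  have hYY : 1 ≤ Y * Y := by
    refine hY1.trans ?_
    have hq := conj_le (mpow_posDef hYp (1/2)) hY1
    rw [mul_one, mpow_half_mul hYp] at hq
    refine hq.trans (le_of_eq ?_)
    set Q := mpow Y (1/2)
    have hQ : Q * Q = Y := mpow_half_mul hYp
    rw [← hQ]
    noncomm_ring
  have hAD : A ≤ S * (Y * Y) * S := by
    have := conj_le hSp hYY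
    rwa [mul_one, hSS] at this
  have hDp : (S * (Y * Y) * S).PosDef := posDef_of_le hA hAD
  have hm := mpow_mono hA hDp hAD (p := p - 1) (by linarith) (by linarith)
  rw [← hD, mpow_unitary_conj hB U hUU' hUU] at hm
  have hm2 := conj_le hYp (conj_le hSp hm)
  have e1 : S * mpow A (p - 1) * S = mpow A p := by
    rw [hS, ← mpow_add hA, ← mpow_add hA]
    congr 1
    ring
  have e2 : R * mpow B (p - 1) * R = mpow B p := by
    rw [hR, ← mpow_add hB, ← mpow_add hB]
    congr 1
    ring
  rw [e1] at hm2
  refine hm2.trans (le_of_eq ?_)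
  calc _ = (Y * S) * star U * mpow B (p - 1) * U * (S * Y) := by noncomm_ring
    _ = R * (U * star U) * mpow B (p - 1) * (U * star U) * R := by
        rw [← hRU, ← hUR]; noncomm_ring
    _ = _ := by rw [hUU, mul_one, mul_one, e2]

theorem near_pow_aux (k : ℕ) : ∀ {A B : Matrix (Fin n) (Fin n) ℂ}, A.PosDef → B.PosDef →
    NearLE A B → ∀ p : ℝ, 1 ≤ p → p ≤ 2 ^ k → NearLE (mpow A p) (mpow B p) := by
  induction k with
  | zero =>
    intro A B hA hB h p h1 h2
    exact near_pow_le_two hA hB h h1 (by rw [pow_zero] at h2; linarith)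
  | succ k ih =>
    intro A B hA hB h p h1 h2
    by_cases hp : p ≤ 2
    · exact near_pow_le_two hA hB h h1 hp
    · push Not at hp
      have h3 := ih hA hB h (p / 2) (by linarith) (by rw [pow_succ] at h2; linarith)
      have h4 := near_pow_le_two (mpow_posDef hA _) (mpow_posDef hB _) h3 (p := 2) (by norm_num)
        le_rfl
      rwa [mpow_mpow hA, mpow_mpow hB, div_mul_cancel₀ _ (two_ne_zero)] at h4

theorem near_pow (hA : A.PosDef) (hB : B.PosDef) (h : NearLE A B) {p : ℝ} (h1 : 1 ≤ p) :
    NearLE (mpow A p) (mpow B p) := by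
  obtain ⟨k, hk⟩ := pow_unbounded_of_one_lt p (one_lt_two (α := ℝ))
  exact near_pow_aux k hA hB h p h1 hk.le

theorem smul_posDef (hA : A.PosDef) {c : ℝ} (hc : 0 < c) : (c • A).PosDef := by
  have := Matrix.PosDef.smul hA hc
  exact this

theorem mpow_smul (hA : A.PosDef) {c : ℝ} (hc : 0 < c) (t : ℝ) :
    mpow (c • A) t = (c ^ t) • mpow A t := by
  have hs : IsSelfAdjoint A := hA.isHermitian
  unfold mpow
  rw [← cfc_comp_smul c (fun x : ℝ => x ^ t) A
      (((Matrix.finite_real_spectrum (A := A)).image _).continuousOn _) hs,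
    ← cfc_smul _ _ _ (h_cont _ _)]
  refine cfc_congr fun x hx => ?_
  simp only [smul_eq_mul]
  exact Real.mul_rpow hc.le (h_spec hA x hx).le

theorem affine_log (hA : A.PosDef) (a q : ℝ) :
    cfc (fun x : ℝ => a * (1 + q * Real.log x)) A = a • (1 + q • mlog A) := by
  have hs : IsSelfAdjoint A := hA.isHermitian
  rw [cfc_const_mul _ _ _ (h_cont _ _), cfc_const_add _ _ _ (h_cont _ _) hs,
    cfc_const_mul _ _ _ (h_cont _ _), map_one]
  rfl

theorem exp_quad {y : ℝ} (hy : |y| ≤ 1) : Real.exp y ≤ 1 + y + y ^ 2 := by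
  have := Real.abs_exp_sub_one_sub_id_le hy
  have := (abs_le.1 this).2
  linarith

theorem log_small (hA : A.PosDef) (hB : B.PosDef) (h : mlog A ≤ mlog B) {p δ : ℝ} (hp : 0 < p)
    (hδ : 0 < δ) : ∃ q : ℝ, 0 < q ∧ q ≤ p ∧ mpow A q ≤ Real.exp (δ * q) • mpow B q := by
  obtain ⟨M, hM⟩ := ((Matrix.finite_real_spectrum (A := A)).image (fun x => |Real.log x|)).bddAbove
  have hM' : ∀ x ∈ spectrum ℝ A, |Real.log x| ≤ |M| := fun x hx =>
    (hM (Set.mem_image_of_mem _ hx)).trans (le_abs_self M)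
  set N := |M| + δ with hN
  have hN0 : 0 < N := by positivity
  obtain ⟨q, hq0, hqp, hq1, hq2⟩ : ∃ q : ℝ, 0 < q ∧ q ≤ p ∧ q * N ≤ 1 ∧ q * N ^ 2 ≤ δ := by
    refine ⟨min p (min (1 / N) (δ / N ^ 2)), by positivity, min_le_left _ _, ?_, ?_⟩
    · rw [← le_div_iff₀ hN0]
      exact (min_le_right _ _).trans (min_le_left _ _)
    · rw [← le_div_iff₀ (by positivity)]
      exact (min_le_right _ _).trans (min_le_right _ _)
  refine ⟨q, hq0, hqp, ?_⟩
  have hE : 0 < Real.exp (δ * q) := Real.exp_pos _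
  have s1 : mpow A q ≤ Real.exp (δ * q) • (1 + q • mlog A) := by
    rw [← affine_log hA]
    refine cfc_mono (fun x hx => ?_) (h_cont _ _) (h_cont _ _)
    have hx0 := h_spec hA x hx
    have hl := hM' x hx
    have hyN : |Real.log x - δ| ≤ N := (abs_sub _ _).trans (by rw [abs_of_pos hδ]; linarith)
    have hy : |q * (Real.log x - δ)| ≤ q * N := by
      rw [abs_mul, abs_of_pos hq0]
      exact mul_le_mul_of_nonneg_left hyN hq0.le
    have h1 := exp_quad (hy.trans hq1)
    have h2 : (q * (Real.log x - δ)) ^ 2 ≤ q * δ := by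
      have : (q * (Real.log x - δ)) ^ 2 ≤ (q * N) ^ 2 := sq_le_sq' (abs_le.1 hy).1 (abs_le.1 hy).2
      nlinarith
    have h3 : x ^ q = Real.exp (δ * q) * Real.exp (q * (Real.log x - δ)) := by
      rw [← Real.exp_add, Real.rpow_def_of_pos hx0]
      congr 1
      ring
    rw [h3]
    exact mul_le_mul_of_nonneg_left (by linarith) hE.le
  have s2 : 1 + q • mlog B ≤ mpow B q := by
    have := affine_log hB 1 q
    rw [one_smul] at this
    rw [← this]
    refine cfc_mono (fun x hx => ?_) (h_cont _ _) (h_cont _ _)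
    rw [Real.rpow_def_of_pos (h_spec hB x hx)]
    linarith [Real.add_one_le_exp (Real.log x * q)]
  have s3 : 1 + q • mlog A ≤ 1 + q • mlog B :=
    add_le_add le_rfl (smul_le_smul_of_nonneg_left h hq0.le)
  exact s1.trans (smul_le_smul_of_nonneg_left (s3.trans s2) hE.le)

theorem near_scaled (hA : A.PosDef) (hB : B.PosDef) (h : mlog A ≤ mlog B) {p δ : ℝ} (hp : 0 < p)
    (hδ : 0 < δ) : NearLE (mpow A p) (Real.exp (δ * p) • mpow B p) := by
  obtain ⟨q, hq0, hqp, hq⟩ := log_small hA hB h hp hδ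
  have hE : 0 < Real.exp (δ * q) := Real.exp_pos _
  have hBq := mpow_posDef hB q
  have hn : NearLE (mpow A q) (Real.exp (δ * q) • mpow B q) :=
    near_of (mpow_posDef hA q) (smul_posDef hBq hE) (Y := 1) le_rfl (by simpa using hq)
  have h2 := near_pow (mpow_posDef hA q) (smul_posDef hBq hE) hn (p := p / q)
    ((one_le_div hq0).2 hqp)
  rw [mpow_smul hBq hE, mpow_mpow hA, mpow_mpow hB, mul_div_cancel₀ _ hq0.ne',
    ← Real.exp_mul, mul_assoc, mul_div_cancel₀ _ hq0.ne'] at h2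
  exact h2

theorem near_log (hA : A.PosDef) (hB : B.PosDef) (h : mlog A ≤ mlog B) {p : ℝ} (hp : 0 ≤ p) :
    NearLE (mpow A p) (mpow B p) := by
  rcases hp.eq_or_lt with rfl | hp
  · rw [mpow_zero hA, mpow_zero hB]
    exact near_of Matrix.PosDef.one Matrix.PosDef.one (Y := 1) le_rfl (by simp)
  have hAp := mpow_posDef hA p
  have hBp := mpow_posDef hB p
  have hG := gm_posDef hAp hBp
  have hGs : IsSelfAdjoint (gmean (mpow A p)⁻¹ (mpow B p) (1/2)) := hG.isHermitian
  change 1 ≤ gmean (mpow A p)⁻¹ (mpow B p) (1/2)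
  have key : ∀ ε : ℝ, 0 < ε → ∀ x ∈ spectrum ℝ (gmean (mpow A p)⁻¹ (mpow B p) (1/2)),
      Real.exp (-ε) ≤ x := by
    intro ε hε
    rw [← algebraMap_le_iff_le_spectrum hGs, Algebra.algebraMap_eq_smul_one]
    have hn := near_scaled hA hB h hp (δ := 2 * ε / p) (by positivity)
    rw [div_mul_cancel₀ _ hp.ne'] at hn
    obtain ⟨Y, hY1, hY⟩ := near_exists hAp (smul_posDef hBp (Real.exp_pos _)) hn
    have hYp := posDef_of_le Matrix.PosDef.one hY1
    refine (smul_le_smul_of_nonneg_left hY1 (Real.exp_pos (-ε)).le).trans ?_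
    refine le_gm hAp hBp (smul_posDef hYp (Real.exp_pos _)) (le_of_eq ?_)
    rw [smul_mul_assoc, smul_mul_assoc, mul_smul_comm, hY, smul_smul, smul_smul, ← Real.exp_add,
      ← Real.exp_add]
    have : -ε + -ε + 2 * ε = 0 := by ring
    rw [this, Real.exp_zero, one_smul]
  refine (CFC.one_le_iff (R := ℝ) _ hGs).2 fun x hx => ?_
  have hx0 := h_spec hG x hx
  by_contra! hx1
  have hl := Real.log_neg hx0 hx1
  have h3 := key (-(Real.log x) / 2) (by linarith) x hx
  have h4 := (Real.le_log_iff_exp_le hx0).2 h3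
  linarith

theorem mlog_mono (hA : A.PosDef) (h : LoewnerLE A B) : LoewnerLE (mlog A) (mlog B) := by
  have h' : A ≤ B := h
  exact CFC.log_le_log h' hA.isStrictlyPositive

end Helpers

/-- if (`A ⪯ B` and `p ≥ 1`) or (`A ≤ B` and `p ≥ 0`) or
(`log A ≤ log B` and `p ≥ 0`), then `Aᵖ ⪯ Bᵖ`, `B⁻ᵖ ⪯ A⁻ᵖ`, and the curves
`t ↦ Aᵖ ◇ₜ Bᵖ` (on `t ≥ 0`), `t ↦ B⁻ᵖ ◇ₜ A⁻ᵖ` (on `t ≥ 0`) and `t ↦ Aᵖ ♮ₜ Bᵖ`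
(on `t ∈ ℝ`) are monotonically increasing in the near order. -/
theorem power_near_order_and_monotone_curves {n : ℕ} (A B : Matrix (Fin n) (Fin n) ℂ)
    (hA : A.PosDef) (hB : B.PosDef) (p : ℝ)
    (hyp : (NearLE A B ∧ 1 ≤ p) ∨ (LoewnerLE A B ∧ 0 ≤ p) ∨
      (LoewnerLE (mlog A) (mlog B) ∧ 0 ≤ p)) :
    NearLE (mpow A p) (mpow B p) ∧
    NearLE (mpow B (-p)) (mpow A (-p)) ∧
    (∀ t s : ℝ, 0 ≤ t → t < s →
      NearLE (wmean (mpow A p) (mpow B p) t) (wmean (mpow A p) (mpow B p) s)) ∧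
    (∀ t s : ℝ, 0 ≤ t → t < s →
      NearLE (wmean (mpow B (-p)) (mpow A (-p)) t) (wmean (mpow B (-p)) (mpow A (-p)) s)) ∧
    (∀ t s : ℝ, t < s →
      NearLE (smean (mpow A p) (mpow B p) t) (smean (mpow A p) (mpow B p) s)) := by
  have hAp := mpow_posDef hA p
  have hBp := mpow_posDef hB p
  have hnear : NearLE (mpow A p) (mpow B p) := by
    rcases hyp with ⟨h, hp⟩ | ⟨h, hp⟩ | ⟨h, hp⟩
    · exact near_pow hA hB h hp
    · exact near_log hA hB (mlog_mono hA h) hp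
    · exact near_log hA hB h hp
  have hinv : NearLE (mpow B (-p)) (mpow A (-p)) := by
    have h := near_inv hAp hBp hnear
    rwa [← mpow_neg_one hAp, ← mpow_neg_one hBp, mpow_mpow hA, mpow_mpow hB, mul_neg_one] at h
  exact ⟨hnear, hinv, fun t s ht hts => near_wmean hAp hBp hnear ht hts,
    fun t s ht hts => near_wmean (mpow_posDef hB _) (mpow_posDef hA _) hinv ht hts,
    fun t s hts => near_smean hAp hBp hnear hts⟩
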